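/- arXiv:2510.19381 — 7 statements merged into one kernel-verified Lean document; each statement's English description precedes it below -/
import Mathlib

section
/- Let n ≥ 2 and m ≥ 1 be integers. The function g : [0,∞) → ℝ defined by g(s) = ((s+n-1)/(2s+n)) · (1 - 1/(2s+n))^{n+m-1} is strictly increasing on [0,∞). In particular, for every integer k ≥ 0, g(k) ≥ g(0) = ((n-1)/n) · (1 - 1/n)^{n+m-1}. -/
/-!
With `x = 1 - 1 / (2 * s + ν)` the first factor is affine in `x`, namely
`(s + ν - 1) / (2 * s + ν) = (1 + (ν - 2) * (1 - x)) / 2`. Since `x` increases with `s`, it suffices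
that `(1 + c * (1 - x)) * x ^ N` increases on `[0, 1]` when `-1 ≤ c ≤ N`. Bounding `x ^ N` below by
its tangent line at `y < x` reduces this to the linear inequality `c * y < N * (1 + c * (1 - x))`.
-/

open Set

section LinearOrderedCommRing

variable {R : Type*} [CommRing R] [LinearOrder R] [IsStrictOrderedRing R] {c x y : R} {N : ℕ}

lemma one_add_mul_one_sub_pos (hc : -1 ≤ c) (hx : 0 < x) (hx1 : x ≤ 1) :
    0 < 1 + c * (1 - x) := by
  have h : 0 ≤ (c + 1) * (1 - x) := mul_nonneg (by linarith) (by linarith)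
  linarith

lemma mul_lt_natCast_mul_one_add_mul_one_sub (hc : -1 ≤ c) (hcN : c ≤ N) (hN : 0 < N)
    (hy : 0 ≤ y) (hyx : y < x) (hx1 : x ≤ 1) :
    c * y < N * (1 + c * (1 - x)) := by
  have hN' : (0 : R) < N := Nat.cast_pos.2 hN
  rcases le_total c 0 with hc0 | hc0
  · calc
      c * y ≤ 0 := mul_nonpos_of_nonpos_of_nonneg hc0 hy
      _ < N * (1 + c * (1 - x)) :=
        mul_pos hN' (one_add_mul_one_sub_pos hc (hy.trans_lt hyx) hx1)
  · calc
      c * y ≤ N * y := mul_le_mul_of_nonneg_right hcN hy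
      _ < N * 1 := mul_lt_mul_of_pos_left (hyx.trans_le hx1) hN'
      _ ≤ N * (1 + c * (1 - x)) :=
        mul_le_mul_of_nonneg_left
          (le_add_of_nonneg_right (mul_nonneg hc0 (sub_nonneg.2 hx1))) hN'.le

theorem strictMonoOn_one_add_mul_one_sub_mul_pow (hc : -1 ≤ c) (hcN : c ≤ N) (hN : 0 < N) :
    StrictMonoOn (fun x : R => (1 + c * (1 - x)) * x ^ N) (Icc 0 1) := by
  rintro y ⟨hy, -⟩ x ⟨-, hx1⟩ hyx
  have hx : 0 < x := hy.trans_lt hyx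
  have hfactor : 0 < 1 + c * (1 - x) := one_add_mul_one_sub_pos hc hx hx1
  rcases hy.eq_or_lt with rfl | hy_pos
  · simpa [hN.ne'] using mul_pos hfactor (pow_pos hx N)
  have htangent : y ^ N + N * y ^ (N - 1) * (x - y) ≤ x ^ N := by
    simpa using pow_add_mul_le_add_pow (b := x - y) hy (by linarith) N
  have hgap : 0 < y ^ (N - 1) * (x - y) * (N * (1 + c * (1 - x)) - c * y) :=
    mul_pos (mul_pos (pow_pos hy_pos _) (sub_pos.2 hyx))
      (sub_pos.2 (mul_lt_natCast_mul_one_add_mul_one_sub hc hcN hN hy hyx hx1))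
  calc
    (1 + c * (1 - y)) * y ^ N
      < (1 + c * (1 - y)) * y ^ N
          + y ^ (N - 1) * (x - y) * (N * (1 + c * (1 - x)) - c * y) :=
        lt_add_of_pos_right _ hgap
    _ = (1 + c * (1 - x)) * (y ^ N + N * y ^ (N - 1) * (x - y)) := by
        rw [← pow_sub_one_mul hN.ne' y]
        ring
    _ ≤ (1 + c * (1 - x)) * x ^ N := mul_le_mul_of_nonneg_left htangent hfactor.le

end LinearOrderedCommRing

lemma add_sub_one_div_two_mul_add_eq {K : Type*} [Field K] [NeZero (2 : K)] {s ν : K}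
    (h : 2 * s + ν ≠ 0) :
    (s + ν - 1) / (2 * s + ν) = (1 + (ν - 2) * (1 / (2 * s + ν))) / 2 := by
  rw [mul_one_div, one_add_div h, div_div, div_eq_div_iff h (mul_ne_zero h two_ne_zero)]
  ring

section LinearOrderedField

variable {K : Type*} [Field K] [LinearOrder K] [IsStrictOrderedRing K] {ν : K}

lemma strictMonoOn_one_sub_one_div_two_mul_add (hν : 0 < ν) :
    StrictMonoOn (fun s : K => 1 - 1 / (2 * s + ν)) (Ici 0) := by
  intro a (ha : 0 ≤ a) b _ hab
  exact sub_lt_sub_left (one_div_lt_one_div_of_lt (by linarith) (by linarith)) 1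

lemma mapsTo_one_sub_one_div_two_mul_add (hν : 1 ≤ ν) :
    MapsTo (fun s : K => 1 - 1 / (2 * s + ν)) (Ici 0) (Icc 0 1) := by
  intro s (hs : 0 ≤ s)
  have hden : 1 ≤ 2 * s + ν := by linarith
  exact ⟨sub_nonneg.2 (div_le_one_of_le₀ hden (by linarith)),
    sub_le_self 1 (one_div_nonneg.2 (by linarith))⟩

theorem strictMonoOn_quotient_function_general {N : ℕ} (hν : 1 ≤ ν) (hνN : ν ≤ N + 2)
    (hN : 0 < N) :
    StrictMonoOn (fun s : K => (s + ν - 1) / (2 * s + ν) * (1 - 1 / (2 * s + ν)) ^ N)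
      (Ici 0) := by
  have hmono := (strictMonoOn_one_add_mul_one_sub_mul_pow (c := ν - 2)
    (by linarith) (by linarith) hN).comp
    (strictMonoOn_one_sub_one_div_two_mul_add (by linarith))
    (mapsTo_one_sub_one_div_two_mul_add hν)
  refine ((strictMono_id.div_const two_pos).comp_strictMonoOn hmono).congr
    fun s (hs : 0 ≤ s) => ?_
  have hden : 2 * s + ν ≠ 0 := by linarith
  simp only [Function.comp_apply, id_eq, sub_sub_cancel, add_sub_one_div_two_mul_add_eq hden]
  ring

end LinearOrderedField

theorem strictMonoOn_quotient_function (n m : ℕ) (hn : 2 ≤ n) (hm : 1 ≤ m) :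
    StrictMonoOn
      (fun s : ℝ => ((s + n - 1) / (2 * s + n)) * (1 - 1 / (2 * s + n)) ^ (n + m - 1))
      (Set.Ici (0 : ℝ)) ∧
    ((((0 : ℝ) + n - 1) / (2 * 0 + n)) * (1 - 1 / (2 * 0 + n)) ^ (n + m - 1)
        = (((n : ℝ) - 1) / n) * (1 - 1 / (n : ℝ)) ^ (n + m - 1)) ∧
    (∀ k : ℕ, (((n : ℝ) - 1) / n) * (1 - 1 / (n : ℝ)) ^ (n + m - 1) ≤
      (((k : ℝ) + n - 1) / (2 * (k : ℝ) + n)) *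
        (1 - 1 / (2 * (k : ℝ) + n)) ^ (n + m - 1)) := by
  have hmono := strictMonoOn_quotient_function_general (ν := (n : ℝ)) (N := n + m - 1)
    (by exact_mod_cast (by omega : 1 ≤ n)) (by exact_mod_cast (by omega)) (by omega)
  refine ⟨hmono, by simp, fun k => ?_⟩
  simpa only [mul_zero, zero_add] using
    hmono.monotoneOn self_mem_Ici (mem_Ici.2 k.cast_nonneg) k.cast_nonneg
end

section
/- For all integers n ≥ 2 and m ≥ 1, c_{n,m} ≥ (1/n) · (1 - 1/n)^{n+m-1} · c_{n-1,m}. -/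
/-- The series `c_{n,m} = ∑_{k≥0} binom(k+n-1, k) / (2k+n)^{n+m}`. -/
noncomputable def seriesC (n m : ℕ) : ℝ :=
  ∑' k : ℕ, ((k + n - 1).choose k : ℝ) / (2 * (k : ℝ) + n) ^ (n + m)

/-!
The inequality holds term by term: the ratio of the `k`-th terms of `c_{n+1,m}` and `c_{n,m}` is
`(k + n) / (n (2k + n + 1)) * ((2k + n) / (2k + n + 1)) ^ (n + m)`, and this is smallest at `k = 0`,
where it equals `1 / (n + 1) * (1 - 1 / (n + 1)) ^ (n + m)`. As `k` grows the first factor may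
decrease, but Bernoulli's inequality shows that the growth of the power compensates for it as soon
as the exponent is at least `n + 1`.
-/

/-- The `k`-th term of the series `c_{n,m}`; the truncated `k + n - 1` agrees with the integer
one for `n ≠ 0`. -/
noncomputable def seriesCTerm (n m k : ℕ) : ℝ :=
  ((k + n - 1).choose k : ℝ) / (2 * (k : ℝ) + n) ^ (n + m)

lemma seriesCTerm_nonneg (n m k : ℕ) : 0 ≤ seriesCTerm n m k := by
  unfold seriesCTerm
  positivity

lemma seriesCTerm_le_one_div_pow {n : ℕ} (hn : 1 ≤ n) (m k : ℕ) :
    seriesCTerm n m k ≤ 1 / ((k + 1 : ℕ) : ℝ) ^ (m + 1) := by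
  obtain ⟨p, rfl⟩ := Nat.exists_eq_add_of_le' hn
  have choose_le : ((k + p).choose k : ℝ) ≤ (2 * (k : ℝ) + (p + 1 : ℕ)) ^ p := by
    calc ((k + p).choose k : ℝ) = (k + p).choose p := by rw [Nat.choose_symm_add]
      _ ≤ ((k + p : ℕ) : ℝ) ^ p := mod_cast Nat.choose_le_pow (k + p) p
      _ ≤ (2 * (k : ℝ) + (p + 1 : ℕ)) ^ p := by gcongr; norm_cast; lia
  calc seriesCTerm (p + 1) m k
      = (k + p).choose k / (2 * (k : ℝ) + (p + 1 : ℕ)) ^ (p + (m + 1)) := by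
        rw [seriesCTerm, add_right_comm p 1 m, ← add_assoc k, Nat.add_sub_cancel, add_assoc p m]
    _ ≤ (2 * (k : ℝ) + (p + 1 : ℕ)) ^ p / (2 * (k : ℝ) + (p + 1 : ℕ)) ^ (p + (m + 1)) := by
        gcongr
    _ = 1 / (2 * (k : ℝ) + (p + 1 : ℕ)) ^ (m + 1) := by
        rw [pow_add, div_mul_cancel_left₀ (by positivity), one_div]
    _ ≤ 1 / ((k + 1 : ℕ) : ℝ) ^ (m + 1) := by gcongr; norm_cast; lia

lemma summable_seriesCTerm {n m : ℕ} (hn : 1 ≤ n) (hm : 1 ≤ m) : Summable (seriesCTerm n m) :=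
  .of_nonneg_of_le (seriesCTerm_nonneg n m) (seriesCTerm_le_one_div_pow hn m)
    ((summable_nat_add_iff 1).2 (Real.summable_one_div_nat_pow.2 (by lia)))

lemma seriesCTerm_succ {n : ℕ} (hn : 1 ≤ n) (m k : ℕ) :
    seriesCTerm (n + 1) m k =
      (k + n) / (n * (2 * k + n + 1)) * ((2 * k + n) / (2 * k + n + 1)) ^ (n + m) *
        seriesCTerm n m k := by
  have choose_succ : ((k + n).choose k : ℝ) * n = (k + n - 1).choose k * (k + n) := by
    have h := Nat.choose_mul_succ_eq (k + n - 1) k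
    rw [Nat.sub_add_cancel (hn.trans (Nat.le_add_left n k)), Nat.add_sub_cancel_left] at h
    exact_mod_cast h.symm
  have hn' : (0 : ℝ) < n := mod_cast hn
  rw [seriesCTerm, seriesCTerm, ← add_assoc k, Nat.add_sub_cancel,
    eq_div_of_mul_eq hn'.ne' choose_succ, add_right_comm n 1 m, pow_succ]
  push_cast
  rw [← add_assoc, div_pow]
  field_simp

lemma one_add_mul_le_one_add_pow {c r : ℝ} {N : ℕ} (hr : 0 ≤ r) (hc : c ≤ N) :
    1 + c * r ≤ (1 + r) ^ N :=
  calc 1 + c * r ≤ 1 + N * r := by gcongr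
    _ ≤ (1 + r) ^ N := one_add_mul_le_pow (by linarith) N

lemma one_div_mul_pow_le_ratio {n k : ℝ} {N : ℕ} (hn : 0 < n) (hk : 0 ≤ k) (hN : n + 1 ≤ N) :
    1 / (n + 1) * (1 - 1 / (n + 1)) ^ N ≤
      (k + n) / (n * (2 * k + n + 1)) * ((2 * k + n) / (2 * k + n + 1)) ^ N := by
  set r := 2 * k / (n * (2 * k + n + 1)) with hr
  have base_eq : (2 * k + n) / (2 * k + n + 1) = (1 - 1 / (n + 1)) * (1 + r) := by
    rw [hr]
    field_simp
    ring
  have base_nonneg : 0 ≤ 1 - 1 / (n + 1) := by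
    rw [one_sub_div (by positivity), add_sub_cancel_right]
    positivity
  have first_factor : 1 / (n + 1) ≤ (k + n) / (n * (2 * k + n + 1)) * (1 + (n + 1) * r) := by
    have difference : (k + n) / (n * (2 * k + n + 1)) * (1 + (n + 1) * r) - 1 / (n + 1) =
        k * (n * (n + 1) * (n + 3) + (6 * n + 2) * k) /
          ((n + 1) * (n * (2 * k + n + 1)) ^ 2) := by
      rw [hr]
      field_simp
      ring
    rw [← sub_nonneg, difference]
    positivity
  calc 1 / (n + 1) * (1 - 1 / (n + 1)) ^ N
      ≤ (k + n) / (n * (2 * k + n + 1)) * (1 + (n + 1) * r) * (1 - 1 / (n + 1)) ^ N := by gcongr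
    _ ≤ (k + n) / (n * (2 * k + n + 1)) * (1 + r) ^ N * (1 - 1 / (n + 1)) ^ N := by
        gcongr
        exact one_add_mul_le_one_add_pow (by positivity) hN
    _ = (k + n) / (n * (2 * k + n + 1)) * ((2 * k + n) / (2 * k + n + 1)) ^ N := by
        rw [base_eq, mul_pow]
        ring

lemma mul_seriesCTerm_le_seriesCTerm_succ {n m : ℕ} (hn : 1 ≤ n) (hm : 1 ≤ m) (k : ℕ) :
    1 / ((n : ℝ) + 1) * (1 - 1 / ((n : ℝ) + 1)) ^ (n + m) * seriesCTerm n m k ≤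
      seriesCTerm (n + 1) m k := by
  rw [seriesCTerm_succ hn]
  have exponent_le : (n : ℝ) + 1 ≤ (n + m : ℕ) := mod_cast Nat.add_le_add_left hm n
  exact mul_le_mul_of_nonneg_right
    (one_div_mul_pow_le_ratio (mod_cast hn) k.cast_nonneg exponent_le) (seriesCTerm_nonneg n m k)

theorem seriesC_ratio_lower_bound (n m : ℕ) (hn : 2 ≤ n) (hm : 1 ≤ m) :
    (1 / (n : ℝ)) * (1 - 1 / (n : ℝ)) ^ (n + m - 1) * seriesC (n - 1) m ≤ seriesC n m := by
  obtain ⟨n, rfl⟩ := Nat.exists_eq_add_of_le' (one_le_two.trans hn)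
  have hn' : 1 ≤ n := Nat.le_of_succ_le_succ hn
  rw [Nat.add_sub_cancel, add_right_comm n 1 m, Nat.add_sub_cancel, Nat.cast_add_one]
  calc 1 / ((n : ℝ) + 1) * (1 - 1 / ((n : ℝ) + 1)) ^ (n + m) * seriesC n m
      = ∑' k, 1 / ((n : ℝ) + 1) * (1 - 1 / ((n : ℝ) + 1)) ^ (n + m) * seriesCTerm n m k :=
        tsum_mul_left.symm
    _ ≤ ∑' k, seriesCTerm (n + 1) m k :=
        ((summable_seriesCTerm hn' hm).mul_left _).tsum_le_tsum
          (mul_seriesCTerm_le_seriesCTerm_succ hn' hm)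
          (summable_seriesCTerm (Nat.le_add_left 1 n) hm)
    _ = seriesC (n + 1) m := rfl
end

section
/- For all integers n ≥ 2 and m ≥ 1, γ̃_{n,m} ≤ γ̃_{n-1,m} · ((n+m-2)^{n+m-1} (n+m) (2n+m-1)) / (n+m-1)^{n+m+1}. -/
/-- `γ̃_{n,m}`. -/
noncomputable def gammaTilde (n m : ℕ) : ℝ :=
  (1 / (2 : ℝ) ^ ((n : ℤ) - m + 1)) *
    (((n : ℝ) + m) / ((n : ℝ) ^ (n + m) * ((n : ℝ) + m - 1) ^ (n + m))) *
    (Real.Gamma ((m : ℝ) / 2) * Real.Gamma (2 * (n : ℝ) + m) /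
      Real.Gamma ((n : ℝ) + m / 2)) *
    (1 / seriesC n m)

/-!
Write `γ̃_{n,m} = K_{n,m} / (n ^ (n + m) * c_{n,m})`. The functional equation of `Γ` makes
`K_{n+1,m} / K_{n,m}` exactly the factor in the claimed bound, so the claim says that
`n ^ (n + m) * c_{n,m} = ∑ binom(k+n-1, k) / (1 + 2k/n) ^ (n + m)` is nondecreasing in `n`.
It is so term by term: passing from `n` to `n + 1` multiplies the binomial coefficient by
`1 + k/n`, and Bernoulli's inequality shows that this outweighs the change in the denominator.
-/

section Bernoulli

lemma one_add_mul_sub_le_pow_of_le_natCast {b c : ℝ} {p : ℕ} (hb : 1 ≤ b) (hp : c ≤ p) :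
    1 + c * (b - 1) ≤ b ^ p :=
  calc 1 + c * (b - 1) ≤ 1 + p * (b - 1) := by gcongr
    _ ≤ b ^ p := one_add_mul_sub_le_pow (by linarith) p

lemma one_add_two_mul_div_add_one_pow_succ_le {c x : ℝ} {p : ℕ} (hc : 0 < c) (hx : 0 ≤ x)
    (hp : c ≤ p) :
    (1 + 2 * x / (c + 1)) ^ (p + 1) ≤ (1 + 2 * x / c) ^ p * (1 + x / c) := by
  set y := 2 * x / (c + 1) with hy
  set B := 1 + 2 * x / c with hB
  have hy0 : 0 ≤ y := by positivity
  have hyB : 1 + y ≤ B := by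
    rw [hy, hB]
    gcongr
    linarith
  have hgap : c * (B / (1 + y) - 1) = y / (1 + y) := by
    have hBy : B = 1 + y + y / c := by
      rw [hB, hy]
      field_simp
      ring
    rw [hBy]
    field_simp
    ring
  have hyx : y / 2 ≤ x / c := by
    rw [hy, div_right_comm, mul_div_cancel_left₀ _ two_ne_zero]
    gcongr
    linarith
  have hpow : 1 + y / (1 + y) ≤ (B / (1 + y)) ^ p := by
    rw [← hgap]
    exact one_add_mul_sub_le_pow_of_le_natCast ((one_le_div (by positivity)).2 hyB) hp
  have hlinear : 1 + y ≤ (1 + y / (1 + y)) * (1 + x / c) :=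
    calc 1 + y ≤ (1 + y / (1 + y)) * (1 + y / 2) := by
          field_simp
          nlinarith
      _ ≤ (1 + y / (1 + y)) * (1 + x / c) := by gcongr
  calc (1 + y) ^ (p + 1) = (1 + y) ^ p * (1 + y) := pow_succ _ _
    _ ≤ (1 + y) ^ p * ((B / (1 + y)) ^ p * (1 + x / c)) := by
      gcongr
      exact hlinear.trans (by gcongr)
    _ = B ^ p * (1 + x / c) := by
      rw [← mul_assoc, ← mul_pow, mul_div_cancel₀ _ (by positivity)]

end Bernoulli

section Series

variable {n m : ℕ}

lemma summable_seriesC (hn : 0 < n) (hm : 0 < m) :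
    Summable fun k : ℕ ↦ ((k + n - 1).choose k : ℝ) / (2 * (k : ℝ) + n) ^ (n + m) := by
  have hmajorant : Summable fun k : ℕ ↦ 1 / ((k + 1 : ℕ) : ℝ) ^ (m + 1) :=
    (summable_nat_add_iff 1).2 (Real.summable_one_div_nat_pow.2 (by omega))
  refine .of_nonneg_of_le (fun k ↦ by positivity) (fun k ↦ ?_) hmajorant
  have hchoose : ((k + n - 1).choose k : ℝ) ≤ (2 * (k : ℝ) + n) ^ (n - 1) := by
    rw [Nat.choose_symm_of_eq_add (show k + n - 1 = k + (n - 1) by omega)]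
    calc ((k + n - 1).choose (n - 1) : ℝ) ≤ ((k + n - 1 : ℕ) : ℝ) ^ (n - 1) :=
          mod_cast Nat.choose_le_pow _ _
      _ ≤ (2 * (k : ℝ) + n) ^ (n - 1) := by
        gcongr
        exact_mod_cast show k + n - 1 ≤ 2 * k + n by omega
  calc ((k + n - 1).choose k : ℝ) / (2 * (k : ℝ) + n) ^ (n + m)
      ≤ (2 * (k : ℝ) + n) ^ (n - 1) / (2 * (k : ℝ) + n) ^ (n + m) := by gcongr
    _ = 1 / (2 * (k : ℝ) + n) ^ (m + 1) := by
      rw [show n + m = n - 1 + (m + 1) by omega, pow_add, div_mul_cancel_left₀ (by positivity),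
        one_div]
    _ ≤ 1 / ((k + 1 : ℕ) : ℝ) ^ (m + 1) := by
      gcongr
      exact_mod_cast show k + 1 ≤ 2 * k + n by omega

lemma seriesC_pos (hn : 0 < n) (hm : 0 < m) : 0 < seriesC n m :=
  (summable_seriesC hn hm).tsum_pos (fun k ↦ by positivity) 0 <| by
    rw [Nat.choose_zero_right]
    positivity

lemma cast_add_choose_eq_mul_one_add_div (hn : 0 < n) (k : ℕ) :
    ((k + n).choose k : ℝ) = (k + n - 1).choose k * (1 + (k : ℝ) / n) := by
  obtain ⟨r, rfl⟩ : ∃ r, n = r + 1 := ⟨n - 1, by omega⟩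
  have habsorb : ((k : ℝ) + r + 1) * (k + r).choose k = (k + (r + 1)).choose k * (r + 1) := by
    rw [Nat.choose_symm_add, Nat.choose_symm_add]
    exact_mod_cast Nat.add_one_mul_choose_eq (k + r) r
  rw [show k + (r + 1) - 1 = k + r by omega]
  push_cast
  field_simp
  linarith

lemma pow_mul_seriesC_term (hn : 0 < n) (k : ℕ) :
    (n : ℝ) ^ (n + m) * ((k + n - 1).choose k / (2 * (k : ℝ) + n) ^ (n + m)) =
      (k + n - 1).choose k / (1 + 2 * (k : ℝ) / n) ^ (n + m) := by
  rw [show 1 + 2 * (k : ℝ) / n = (2 * k + n) / n by field_simp; ring, div_pow]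
  field_simp

lemma pow_mul_seriesC_le_succ (hn : 0 < n) (hm : 0 < m) :
    (n : ℝ) ^ (n + m) * seriesC n m ≤
      ((n + 1 : ℕ) : ℝ) ^ (n + 1 + m) * seriesC (n + 1) m := by
  unfold seriesC
  rw [← tsum_mul_left, ← tsum_mul_left]
  refine ((summable_seriesC hn hm).mul_left _).tsum_le_tsum (fun k ↦ ?_)
    ((summable_seriesC n.add_one_pos hm).mul_left _)
  have hbernoulli : (1 + 2 * (k : ℝ) / (n + 1)) ^ (n + m + 1) ≤
      (1 + 2 * (k : ℝ) / n) ^ (n + m) * (1 + (k : ℝ) / n) :=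
    one_add_two_mul_div_add_one_pow_succ_le (by positivity) k.cast_nonneg
      (mod_cast Nat.le_add_right n m)
  rw [pow_mul_seriesC_term hn, pow_mul_seriesC_term n.add_one_pos, ← add_assoc,
    Nat.add_sub_cancel, cast_add_choose_eq_mul_one_add_div hn, Nat.cast_add_one,
    add_right_comm n 1 m, div_le_div_iff₀ (by positivity) (by positivity), mul_assoc]
  gcongr
  exact hbernoulli.trans_eq (mul_comm _ _)

end Series

section Prefactor

lemma Gamma_two_mul_add_one_div_Gamma_add_one {s : ℝ} (hs : s ≠ 0) (hs' : 2 * s + 1 ≠ 0) :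
    Real.Gamma (2 * (s + 1)) / Real.Gamma (s + 1) =
      2 * (2 * s + 1) * (Real.Gamma (2 * s) / Real.Gamma s) := by
  rw [show 2 * (s + 1) = 2 * s + 1 + 1 by ring, Real.Gamma_add_one hs',
    Real.Gamma_add_one (mul_ne_zero two_ne_zero hs), Real.Gamma_add_one hs]
  field_simp

/-- The factor `K_{n,m}` in `γ̃_{n,m} = K_{n,m} / (n ^ (n + m) * c_{n,m})`. The power `n ^ (n + m)`
is left out because it makes the series monotone in `n`. -/
noncomputable def gammaTildePrefactor (n m : ℕ) : ℝ :=
  (1 / (2 : ℝ) ^ ((n : ℤ) - m + 1)) * (((n : ℝ) + m) / ((n : ℝ) + m - 1) ^ (n + m)) *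
    (Real.Gamma ((m : ℝ) / 2) * Real.Gamma (2 * (n : ℝ) + m) / Real.Gamma ((n : ℝ) + m / 2))

lemma gammaTilde_eq_prefactor_div (n m : ℕ) :
    gammaTilde n m = gammaTildePrefactor n m / ((n : ℝ) ^ (n + m) * seriesC n m) := by
  unfold gammaTilde gammaTildePrefactor
  ring

variable {n m : ℕ}

lemma gammaTildePrefactor_nonneg (h : 0 < n + m) : 0 ≤ gammaTildePrefactor n m := by
  have hbase : 0 ≤ (n : ℝ) + m - 1 := sub_nonneg.2 (mod_cast h)
  have hΓ {x : ℝ} (hx : 0 ≤ x) : 0 ≤ Real.Gamma x := Real.Gamma_nonneg_of_nonneg hx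
  exact mul_nonneg (by positivity)
    (div_nonneg (mul_nonneg (hΓ (by positivity)) (hΓ (by positivity))) (hΓ (by positivity)))

lemma gammaTildePrefactor_succ (h : 1 < n + m) :
    gammaTildePrefactor (n + 1) m = gammaTildePrefactor n m *
      (((n : ℝ) + m - 1) ^ (n + m) * ((n : ℝ) + m + 1) * (2 * (n : ℝ) + m + 1) /
        ((n : ℝ) + m) ^ (n + m + 2)) := by
  have hsum : (1 : ℝ) < n + m := mod_cast h
  have hpred : ((n : ℝ) + m - 1) ^ (n + m) ≠ 0 := pow_ne_zero _ (by linarith)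
  have hΓ : Real.Gamma (2 * ((n : ℝ) + 1) + m) / Real.Gamma ((n : ℝ) + 1 + m / 2) =
      2 * (2 * (n : ℝ) + m + 1) *
        (Real.Gamma (2 * (n : ℝ) + m) / Real.Gamma ((n : ℝ) + m / 2)) := by
    convert Gamma_two_mul_add_one_div_Gamma_add_one (s := (n : ℝ) + m / 2)
      (by linarith) (by linarith) using 3 <;> ring_nf
  have htwo : (2 : ℝ) ^ (((n + 1 : ℕ) : ℤ) - m + 1) = 2 ^ ((n : ℤ) - m + 1) * 2 := by
    rw [← zpow_add_one₀ two_ne_zero]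
    push_cast
    ring_nf
  unfold gammaTildePrefactor
  rw [htwo, Nat.cast_add_one, mul_div_assoc (Real.Gamma _), mul_div_assoc (Real.Gamma _), hΓ,
    add_right_comm (n : ℝ), add_sub_cancel_right, add_right_comm n]
  field_simp
  ring

end Prefactor

theorem gammaTilde_ratio_upper_bound (n m : ℕ) (hn : 2 ≤ n) (hm : 1 ≤ m) :
    gammaTilde n m ≤
      gammaTilde (n - 1) m *
        ((((n : ℝ) + m - 2) ^ (n + m - 1) * ((n : ℝ) + m) * (2 * (n : ℝ) + m - 1)) /
          ((n : ℝ) + m - 1) ^ (n + m + 1)) := by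
  obtain ⟨n, rfl⟩ : ∃ r, n = r + 1 := ⟨n - 1, by omega⟩
  have hn' : 0 < n := by omega
  have hfactor : gammaTildePrefactor (n + 1) m = gammaTildePrefactor n m *
      ((((n + 1 : ℕ) : ℝ) + m - 2) ^ (n + 1 + m - 1) * (((n + 1 : ℕ) : ℝ) + m) *
        (2 * ((n + 1 : ℕ) : ℝ) + m - 1) / (((n + 1 : ℕ) : ℝ) + m - 1) ^ (n + 1 + m + 1)) := by
    rw [gammaTildePrefactor_succ (by omega), show n + 1 + m - 1 = n + m by omega]
    push_cast
    ring_nf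
  have hscaled : 0 < (n : ℝ) ^ (n + m) * seriesC n m :=
    mul_pos (by positivity) (seriesC_pos hn' hm)
  rw [gammaTilde_eq_prefactor_div, gammaTilde_eq_prefactor_div, Nat.add_sub_cancel,
    div_mul_eq_mul_div, ← hfactor]
  exact div_le_div_of_nonneg_left (gammaTildePrefactor_nonneg (by omega)) hscaled
    (pow_mul_seriesC_le_succ hn' hm)
end

section
/- For all integers n ≥ 2 and m ≥ 1, ((n+m-2)^{n+m-1} (n+m) (2n+m-1)) / (n+m-1)^{n+m+1} < 1. -/
/-!
Put `k = n + m - 2`. Since `n ≤ k + 2`, the last factor `k + 1 + n` of the numerator is at most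
`2k + 3`, so it suffices that `k ^ (k + 1) (k + 2) (2k + 3) < (k + 1) ^ (k + 3)`. The first three
terms of the binomial expansion give `(1 + 1/k) ^ (k + 1) ≥ (5k + 3) / (2k)` for `k ≥ 1`, leaving
`2k (k + 2) (2k + 3) < (5k + 3) (k + 1) ^ 2`, where the difference of the two sides is
`(k - 1) ^ 2 (k + 1) + 2`.
-/

theorem sum_range_choose_le_add_pow {R : Type*} [CommSemiring R] [PartialOrder R]
    [IsOrderedRing R] {x y : R} (hx : 0 ≤ x) (hy : 0 ≤ y) {r n : ℕ} (hr : r ≤ n + 1) :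
    ∑ i ∈ Finset.range r, x ^ i * y ^ (n - i) * n.choose i ≤ (x + y) ^ n := by
  rw [add_pow]
  exact Finset.sum_le_sum_of_subset_of_nonneg (Finset.range_subset_range.2 hr)
    fun i _ _ ↦ by positivity

theorem five_mul_add_three_mul_pow_le_two_mul_succ_pow {k : ℕ} (hk : k ≠ 0) :
    (5 * k + 3) * k ^ k ≤ 2 * (k + 1) ^ (k + 1) := by
  obtain ⟨j, rfl⟩ := Nat.exists_eq_add_one_of_ne_zero hk
  have two_mul_choose : 2 * (j + 2).choose 2 = (j + 2) * (j + 1) := by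
    rw [mul_comm, ← Nat.add_one_mul_choose_eq, Nat.choose_one_right]
  calc (5 * (j + 1) + 3) * (j + 1) ^ (j + 1)
      = 2 * ((j + 1) ^ (j + 2) + (j + 1) ^ (j + 1) * (j + 2))
        + (j + 1) ^ j * ((j + 2) * (j + 1)) := by ring
    _ = 2 * ∑ i ∈ Finset.range 3, 1 ^ i * (j + 1) ^ (j + 2 - i) * (j + 2).choose i := by
        rw [← two_mul_choose]
        simp only [Finset.sum_range_succ, Finset.sum_range_zero, Nat.choose_zero_right,
          Nat.choose_one_right, one_pow, Nat.sub_zero, Nat.add_sub_cancel, Nat.reduceSubDiff]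
        ring
    _ ≤ 2 * (1 + (j + 1)) ^ (j + 2) :=
        Nat.mul_le_mul_left 2 <|
          sum_range_choose_le_add_pow one_pos.le (j + 1).zero_le (by omega)
    _ = 2 * (j + 1 + 1) ^ (j + 2) := by rw [add_comm 1]

theorem pow_succ_mul_lt_succ_pow_add_three (k : ℕ) :
    k ^ (k + 1) * (k + 2) * (2 * k + 3) < (k + 1) ^ (k + 3) := by
  rcases eq_or_ne k 0 with rfl | hk
  · simp
  have cubic_lt : 2 * k * (k + 2) * (2 * k + 3) < (5 * k + 3) * (k + 1) ^ 2 := by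
    zify
    nlinarith [mul_nonneg (sq_nonneg ((k : ℤ) - 1)) (by positivity : (0 : ℤ) ≤ k + 1)]
  refine lt_of_mul_lt_mul_left (a := 2) ?_ two_pos.le
  calc 2 * (k ^ (k + 1) * (k + 2) * (2 * k + 3))
      = k ^ k * (2 * k * (k + 2) * (2 * k + 3)) := by ring
    _ < k ^ k * ((5 * k + 3) * (k + 1) ^ 2) := by gcongr
    _ = (5 * k + 3) * k ^ k * (k + 1) ^ 2 := by ring
    _ ≤ 2 * (k + 1) ^ (k + 1) * (k + 1) ^ 2 :=
        Nat.mul_le_mul_right _ (five_mul_add_three_mul_pow_le_two_mul_succ_pow hk)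
    _ = 2 * (k + 1) ^ (k + 3) := by ring

theorem ratio_bound_lt_one_general (n m : ℕ) (hnm : 2 ≤ n + m) :
    (((n : ℝ) + m - 2) ^ (n + m - 1) * ((n : ℝ) + m) * (2 * (n : ℝ) + m - 1)) /
      ((n : ℝ) + m - 1) ^ (n + m + 1) < 1 := by
  obtain ⟨k, hk⟩ := Nat.exists_eq_add_of_le' hnm
  have sum_eq : (n : ℝ) + m = k + 2 := by exact_mod_cast hk
  have base_eq : (n : ℝ) + m - 2 = k := by linarith
  have denom_eq : (n : ℝ) + m - 1 = k + 1 := by linarith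
  have last_le : 2 * (n : ℝ) + m - 1 ≤ 2 * k + 3 := by linarith [m.cast_nonneg (α := ℝ)]
  rw [base_eq, denom_eq, sum_eq, hk, div_lt_one (by positivity)]
  calc (k : ℝ) ^ (k + 1) * (k + 2) * (2 * n + m - 1)
      ≤ (k : ℝ) ^ (k + 1) * (k + 2) * (2 * k + 3) := by gcongr
    _ < (k + 1) ^ (k + 3) := by exact_mod_cast pow_succ_mul_lt_succ_pow_add_three k

theorem ratio_bound_lt_one (n m : ℕ) (hn : 2 ≤ n) (hm : 1 ≤ m) :
    (((n : ℝ) + m - 2) ^ (n + m - 1) * ((n : ℝ) + m) * (2 * (n : ℝ) + m - 1)) /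
      ((n : ℝ) + m - 1) ^ (n + m + 1) < 1 :=
  ratio_bound_lt_one_general n m (hn.trans (Nat.le_add_right n m))
end

section
/- For all integers n ≥ 2 and m ≥ 1, γ̃_{n,m} < γ̃_{n-1,m}; that is, for each fixed m ≥ 1 the sequence n ↦ γ̃_{n,m} is strictly decreasing. -/
/-!
Write `N = n + m` and `γ̃_{n,m} = A_n / S_n`, where `S_n = n ^ N * c_{n,m}` and `A_n` collects the
remaining factors. The series `S_n = ∑ k, binom(k+n-1, k) * (n / (2k+n)) ^ N` increases with `n`
term by term, by Bernoulli's inequality. The factor `A_n` strictly decreases: the functional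
equation of `Γ` gives `A_{n+1} / A_n = (2n+m+1) / N * (1 + 1/N) * (1 - 1/N) ^ N`, where
`(2n+m+1) / N ≤ 2`, and `(1 - 1/N) ^ N ≤ e⁻¹` bounds the remaining product by `1/2`, except for
`N = 2`, where it equals `3/8`.
-/

/-- The `k`-th term of `n ^ (n + m) * c_{n,m}`, which equals `1` at `k = 0` for `n > 0`. -/
noncomputable def normalizedTerm (n m k : ℕ) : ℝ :=
  (k + n - 1).choose k * ((n : ℝ) / (2 * k + n)) ^ (n + m)

/-- The normalized series `n ^ (n + m) * c_{n,m}`, the factor of `1 / γ̃_{n,m}` that increases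
with `n` term by term. -/
noncomputable def normalizedSeries (n m : ℕ) : ℝ :=
  ∑' k : ℕ, normalizedTerm n m k

/-- The powers of two and Gamma values in `γ̃_{n,m}`, separated because together they satisfy a
first-order recurrence in `n`. -/
noncomputable def gammaWeight (n m : ℕ) : ℝ :=
  1 / (2 : ℝ) ^ ((n : ℤ) - m + 1) *
    (Real.Gamma ((m : ℝ) / 2) * Real.Gamma (2 * (n : ℝ) + m) / Real.Gamma ((n : ℝ) + m / 2))

/-- The product `A_n` of all factors of `γ̃_{n,m}` other than `1 / (n ^ (n + m) * c_{n,m})`. -/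
noncomputable def gammaPrefactor (n m : ℕ) : ℝ :=
  gammaWeight n m * (((n : ℝ) + m) / ((n : ℝ) + m - 1) ^ (n + m))

theorem pow_mul_seriesC (n m : ℕ) : (n : ℝ) ^ (n + m) * seriesC n m = normalizedSeries n m := by
  simp only [seriesC, normalizedSeries, normalizedTerm, ← tsum_mul_left, div_pow]
  exact tsum_congr fun k => by ring

theorem gammaTilde_eq_div (n m : ℕ) :
    gammaTilde n m = gammaPrefactor n m / normalizedSeries n m := by
  rw [← pow_mul_seriesC, gammaTilde, gammaPrefactor, gammaWeight]
  ring

theorem add_choose_mul (n k : ℕ) :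
    (k + n).choose k * n = (k + n - 1).choose k * (k + n) := by
  cases n with
  | zero => cases k <;> simp
  | succ n =>
    have h := Nat.choose_mul_succ_eq (k + n) k
    rw [show k + n + 1 - k = n + 1 by omega] at h
    exact h.symm

theorem div_pow_le_mul_div_pow_succ {x t : ℝ} (hx : 0 ≤ x) (ht : 0 < t) {N : ℕ} (hN : t ≤ N) :
    (t / (2 * x + t)) ^ N ≤ (x + t) / t * ((t + 1) / (2 * x + (t + 1))) ^ (N + 1) := by
  set r := t / (2 * x + t)
  set s := (t + 1) / (2 * x + (t + 1)) with hs
  set z := 2 * x / (t * (2 * x + (t + 1))) with hz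
  have hz_nonneg : 0 ≤ z := by positivity
  have s_eq : s = r * (1 + z) := by
    simp only [r, s, z]
    field_simp
    ring
  have bernoulli : 1 + t * z ≤ (1 + z) ^ N :=
    calc 1 + t * z ≤ 1 + N * z := by gcongr
      _ ≤ (1 + z) ^ N := one_add_mul_le_pow (by linarith) N
  have first_order : 1 ≤ (x + t) / t * s * (1 + t * z) := by
    have h : (x + t) / t * s * (1 + t * z) - 1 =
        x * (4 * x + (t + 1) ^ 2) / (t * (2 * x + (t + 1)) ^ 2) := by
      rw [hs, hz]
      field_simp
      ring
    rw [← sub_nonneg, h]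
    positivity
  calc r ^ N ≤ r ^ N * ((x + t) / t * s * (1 + t * z)) :=
        le_mul_of_one_le_right (by positivity) first_order
    _ ≤ r ^ N * ((x + t) / t * s * (1 + z) ^ N) := by gcongr
    _ = (x + t) / t * s ^ (N + 1) := by rw [pow_succ, s_eq, mul_pow]; ring

theorem normalizedTerm_nonneg (n m k : ℕ) : 0 ≤ normalizedTerm n m k := by
  unfold normalizedTerm
  positivity

theorem normalizedTerm_le_succ {n : ℕ} (hn : 0 < n) (m k : ℕ) :
    normalizedTerm n m k ≤ normalizedTerm (n + 1) m k := by
  have hn' : (0 : ℝ) < n := by exact_mod_cast hn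
  have hchoose : ((k + n).choose k : ℝ) = (k + n - 1).choose k * ((k + n) / n) := by
    rw [mul_div_assoc', eq_div_iff hn'.ne']
    exact_mod_cast add_choose_mul n k
  have hpow := div_pow_le_mul_div_pow_succ (Nat.cast_nonneg k) hn'
    (show (n : ℝ) ≤ (n + m : ℕ) by exact_mod_cast Nat.le_add_right n m)
  calc normalizedTerm n m k
      ≤ (k + n - 1).choose k *
          ((k + n) / n * (((n : ℝ) + 1) / (2 * k + (n + 1))) ^ (n + m + 1)) := by
        rw [normalizedTerm]
        gcongr
    _ = normalizedTerm (n + 1) m k := by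
        rw [normalizedTerm, show k + (n + 1) - 1 = k + n by omega, hchoose,
          Nat.add_right_comm n 1 m]
        push_cast
        ring

theorem normalizedTerm_le_mul_one_div_pow {n : ℕ} (hn : 0 < n) (m k : ℕ) :
    normalizedTerm n m k ≤ (n : ℝ) ^ (n + m) * (1 / ((k + 1 : ℕ) : ℝ) ^ (m + 1)) := by
  obtain ⟨p, rfl⟩ : ∃ p, n = p + 1 := ⟨n - 1, by omega⟩
  have hchoose : (k + (p + 1) - 1).choose k ≤ (2 * k + (p + 1)) ^ p :=
    calc (k + p).choose k = (k + p).choose p := Nat.choose_symm_add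
      _ ≤ (k + p) ^ p := Nat.choose_le_pow _ _
      _ ≤ (2 * k + (p + 1)) ^ p := Nat.pow_le_pow_left (by omega) p
  have hchoose_real : ((k + (p + 1) - 1).choose k : ℝ) ≤ (2 * k + (p + 1 : ℕ)) ^ p := by
    exact_mod_cast hchoose
  have hbase : ((k + 1 : ℕ) : ℝ) ≤ 2 * k + (p + 1 : ℕ) := by
    exact_mod_cast (by omega : k + 1 ≤ 2 * k + (p + 1))
  calc normalizedTerm (p + 1) m k
      ≤ (2 * k + (p + 1 : ℕ)) ^ p * (((p + 1 : ℕ) : ℝ) / (2 * k + (p + 1 : ℕ))) ^ (p + 1 + m) := by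
        rw [normalizedTerm]
        gcongr
    _ = ((p + 1 : ℕ) : ℝ) ^ (p + 1 + m) * (1 / (2 * k + (p + 1 : ℕ)) ^ (m + 1)) := by
        rw [div_pow, show p + 1 + m = p + (m + 1) by omega, pow_add (2 * (k : ℝ) + _)]
        field_simp
    _ ≤ ((p + 1 : ℕ) : ℝ) ^ (p + 1 + m) * (1 / ((k + 1 : ℕ) : ℝ) ^ (m + 1)) := by gcongr

theorem summable_normalizedTerm {n m : ℕ} (hn : 0 < n) (hm : 0 < m) :
    Summable (normalizedTerm n m) := by
  have hseries : Summable fun k : ℕ => 1 / ((k + 1 : ℕ) : ℝ) ^ (m + 1) :=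
    (summable_nat_add_iff 1).2 (Real.summable_one_div_nat_pow.2 (by omega))
  exact (hseries.mul_left ((n : ℝ) ^ (n + m))).of_nonneg_of_le
    (normalizedTerm_nonneg n m) (normalizedTerm_le_mul_one_div_pow hn m)

theorem normalizedSeries_pos {n m : ℕ} (hn : 0 < n) (hm : 0 < m) : 0 < normalizedSeries n m :=
  (summable_normalizedTerm hn hm).tsum_pos (normalizedTerm_nonneg n m) 0
    (by simp [normalizedTerm, hn.ne'])

theorem normalizedSeries_le_succ {n m : ℕ} (hn : 0 < n) (hm : 0 < m) :
    normalizedSeries n m ≤ normalizedSeries (n + 1) m :=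
  (summable_normalizedTerm hn hm).tsum_le_tsum (normalizedTerm_le_succ hn m)
    (summable_normalizedTerm n.succ_pos hm)

theorem one_sub_one_div_pow_lt {N : ℕ} (hN : 0 < N) :
    (1 - 1 / (N : ℝ)) ^ N < N / (2 * (N + 1)) := by
  obtain hN3 | hN3 := lt_or_ge N 3
  · interval_cases N <;> norm_num
  have hN' : (3 : ℝ) ≤ N := by exact_mod_cast hN3
  calc (1 - 1 / (N : ℝ)) ^ N ≤ Real.exp (-1) := Real.one_sub_div_pow_le_exp_neg (by linarith)
    _ < 3 / 8 := by
      rw [Real.exp_neg, inv_lt_comm₀ (Real.exp_pos 1) (by norm_num)]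
      linarith [Real.exp_one_gt_d9]
    _ ≤ N / (2 * (N + 1)) := by
      rw [div_le_div_iff₀ (by norm_num) (by positivity)]
      linarith

theorem two_mul_mul_add_one_div_pow_lt {N : ℕ} (hN : 2 ≤ N) :
    2 * (N : ℝ) * ((N + 1) / (N : ℝ) ^ (N + 1)) < N / ((N : ℝ) - 1) ^ N := by
  have hN' : (2 : ℝ) ≤ N := by exact_mod_cast hN
  have h := one_sub_one_div_pow_lt (N := N) (by omega)
  rw [one_sub_div (by positivity), div_pow, div_lt_div_iff₀ (by positivity) (by positivity)] at h
  have hpos : 0 < ((N : ℝ) - 1) ^ N := pow_pos (by linarith) N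
  rw [mul_div_assoc', div_lt_div_iff₀ (by positivity) hpos]
  calc 2 * (N : ℝ) * (N + 1) * ((N : ℝ) - 1) ^ N
      = N * (((N : ℝ) - 1) ^ N * (2 * (N + 1))) := by ring
    _ < N * (N * (N : ℝ) ^ N) := by gcongr
    _ = N * (N : ℝ) ^ (N + 1) := by rw [pow_succ']

theorem Gamma_two_mul_add_one_div_Gamma_add_one_s10 {x : ℝ} (hx : x ≠ 0) (hx' : 2 * x + 1 ≠ 0) :
    Real.Gamma (2 * (x + 1)) / Real.Gamma (x + 1) =
      2 * (2 * x + 1) * (Real.Gamma (2 * x) / Real.Gamma x) := by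
  rw [show 2 * (x + 1) = 2 * x + 1 + 1 by ring, Real.Gamma_add_one hx',
    Real.Gamma_add_one (mul_ne_zero two_ne_zero hx), Real.Gamma_add_one hx,
    show (2 * x + 1) * (2 * x * Real.Gamma (2 * x)) =
      x * (2 * (2 * x + 1) * Real.Gamma (2 * x)) by ring, mul_div_mul_left _ _ hx, mul_div_assoc]

theorem gammaWeight_pos (n : ℕ) {m : ℕ} (hm : 0 < m) : 0 < gammaWeight n m := by
  unfold gammaWeight
  positivity

theorem gammaWeight_succ (n : ℕ) {m : ℕ} (hm : 0 < m) :
    gammaWeight (n + 1) m = (2 * n + m + 1) * gammaWeight n m := by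
  have htwo : (2 : ℝ) ^ (((n + 1 : ℕ) : ℤ) - m + 1) = 2 * 2 ^ ((n : ℤ) - m + 1) := by
    rw [← zpow_one_add₀ two_ne_zero]
    congr 1
    push_cast
    ring
  have hGamma := Gamma_two_mul_add_one_div_Gamma_add_one_s10 (x := (n : ℝ) + m / 2)
    (by positivity) (by positivity)
  rw [show 2 * ((n : ℝ) + m / 2 + 1) = 2 * ((n + 1 : ℕ) : ℝ) + m by push_cast; ring,
    show (n : ℝ) + m / 2 + 1 = ((n + 1 : ℕ) : ℝ) + m / 2 by push_cast; ring,
    show 2 * ((n : ℝ) + m / 2) = 2 * n + m by ring] at hGamma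
  rw [gammaWeight, gammaWeight, htwo, mul_div_assoc, hGamma]
  field_simp

theorem gammaPrefactor_pos {n m : ℕ} (hn : 0 < n) (hm : 0 < m) : 0 < gammaPrefactor n m := by
  have hbase : (0 : ℝ) < n + m - 1 := by
    rw [sub_pos]
    exact_mod_cast (by omega : 1 < n + m)
  have hweight := gammaWeight_pos n hm
  unfold gammaPrefactor
  positivity

theorem gammaPrefactor_succ_lt {n m : ℕ} (hn : 0 < n) (hm : 0 < m) :
    gammaPrefactor (n + 1) m < gammaPrefactor n m := by
  have hrational := two_mul_mul_add_one_div_pow_lt (N := n + m) (by omega)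
  push_cast at hrational
  have hm' : (1 : ℝ) ≤ m := by exact_mod_cast hm
  have hweight := gammaWeight_pos n hm
  calc gammaPrefactor (n + 1) m
      = gammaWeight n m *
          ((2 * n + m + 1) * (((n : ℝ) + m + 1) / ((n : ℝ) + m) ^ (n + m + 1))) := by
        rw [gammaPrefactor, gammaWeight_succ n hm, Nat.add_right_comm n 1 m]
        push_cast
        ring
    _ ≤ gammaWeight n m *
          (2 * (n + m) * (((n : ℝ) + m + 1) / ((n : ℝ) + m) ^ (n + m + 1))) := by
        gcongr
        linarith
    _ < gammaWeight n m * (((n : ℝ) + m) / ((n : ℝ) + m - 1) ^ (n + m)) :=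
        mul_lt_mul_of_pos_left hrational hweight
    _ = gammaPrefactor n m := rfl

theorem gammaTilde_strict_decreasing_in_n (n m : ℕ) (hn : 2 ≤ n) (hm : 1 ≤ m) :
    gammaTilde n m < gammaTilde (n - 1) m := by
  obtain ⟨n, rfl⟩ : ∃ k, n = k + 1 := ⟨n - 1, by omega⟩
  have hn_pos : 0 < n := by omega
  rw [Nat.add_sub_cancel, gammaTilde_eq_div, gammaTilde_eq_div]
  exact div_lt_div₀ (gammaPrefactor_succ_lt hn_pos hm) (normalizedSeries_le_succ hn_pos hm)
    (gammaPrefactor_pos hn_pos hm).le (normalizedSeries_pos hn_pos hm)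
end

section
/- For every integer m ≥ 2, γ̄_{1,m} ≤ (64/(27e)) · γ̄_{1,m-1}, where e is Euler's number. In particular γ̄_{1,m} < γ̄_{1,m-1}. -/
/-- `γ̄_{n,m}`. -/
noncomputable def gammaBar (n m : ℕ) : ℝ :=
  (1 / (2 : ℝ) ^ ((n : ℤ) - m + 1)) *
    (((n : ℝ) + m) / ((n : ℝ) + m - 1) ^ (n + m)) *
    (Real.Gamma ((m : ℝ) / 2) * Real.Gamma (2 * (n : ℝ) + m) /
      Real.Gamma ((n : ℝ) + m / 2))

/-!
For `n = 1` the Gamma factors reduce to a factorial, and the ratio of consecutive terms is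
`γ̄_{1,m+1} / γ̄_{1,m} = 2 * (1 - 1 / (m + 1)) ^ (m + 1) * (m * (m + 2) ^ 2 / (m + 1) ^ 3)`.
The power is at most `1 / e`, and the rational factor is at most `32 / 27`, its value at `m = 2`.
-/

theorem gammaBar_pos {n m : ℕ} (hm : 0 < m) (hnm : 1 < n + m) : 0 < gammaBar n m := by
  have hm' : (0 : ℝ) < m := by exact_mod_cast hm
  have hbase : (0 : ℝ) < n + m - 1 := sub_pos.mpr (by exact_mod_cast hnm)
  have hΓm : 0 < Real.Gamma (m / 2) := Real.Gamma_pos_of_pos (by positivity)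
  have hΓnum : 0 < Real.Gamma (2 * n + m) := Real.Gamma_pos_of_pos (by positivity)
  have hΓden : 0 < Real.Gamma (n + m / 2) := Real.Gamma_pos_of_pos (by positivity)
  have hnum : (0 : ℝ) < n + m := add_pos_of_nonneg_of_pos n.cast_nonneg hm'
  exact mul_pos (mul_pos (by positivity) (div_pos hnum (pow_pos hbase _)))
    (div_pos (mul_pos hΓm hΓnum) hΓden)

theorem gammaBar_one_eq {m : ℕ} (hm : 0 < m) :
    gammaBar 1 m = 2 ^ m * (m + 1) * (m + 1).factorial / (2 * (m : ℝ) ^ (m + 2)) := by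
  have hm' : (0 : ℝ) < m := by exact_mod_cast hm
  have hΓm : Real.Gamma (m / 2) ≠ 0 := (Real.Gamma_pos_of_pos (half_pos hm')).ne'
  have hΓden : Real.Gamma (1 + m / 2) = m / 2 * Real.Gamma (m / 2) := by
    rw [add_comm, Real.Gamma_add_one (half_pos hm').ne']
  have hΓnum : Real.Gamma (2 * 1 + m) = (m + 1).factorial := by
    rw [← Real.Gamma_nat_eq_factorial]
    push_cast
    ring_nf
  have hpow : (2 : ℝ) ^ ((1 : ℤ) - m + 1) = 4 / 2 ^ m := by
    rw [sub_add_eq_add_sub, zpow_sub₀ two_ne_zero, zpow_natCast]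
    norm_num
  rw [gammaBar, Nat.cast_one, Nat.cast_one, hΓden, hΓnum, hpow, add_sub_cancel_left]
  field_simp
  ring

theorem gammaBar_one_succ {m : ℕ} (hm : 0 < m) :
    gammaBar 1 (m + 1) =
      2 * (1 - 1 / (m + 1 : ℝ)) ^ (m + 1) * (m * (m + 2) ^ 2 / (m + 1) ^ 3) * gammaBar 1 m := by
  have hm' : (0 : ℝ) < m := by exact_mod_cast hm
  have hsub : (1 : ℝ) - 1 / (m + 1) = m / (m + 1) := by field_simp; ring
  rw [gammaBar_one_eq hm, gammaBar_one_eq (Nat.add_one_pos m), Nat.factorial_succ (m + 1), hsub,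
    div_pow]
  push_cast
  field_simp [hm'.ne']
  ring

theorem mul_add_two_sq_div_add_one_cube_le {x : ℝ} (hx : -1 < x) :
    x * (x + 2) ^ 2 / (x + 1) ^ 3 ≤ 32 / 27 := by
  have hx₁ : 0 < x + 1 := by linarith
  rw [div_le_div_iff₀ (by positivity) (by norm_num), ← sub_nonneg]
  calc 0 ≤ (5 * x + 8) * (x - 2) ^ 2 := mul_nonneg (by linarith) (sq_nonneg _)
    _ = 32 * (x + 1) ^ 3 - x * (x + 2) ^ 2 * 27 := by ring

theorem gammaBar_one_succ_le {m : ℕ} (hm : 0 < m) :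
    gammaBar 1 (m + 1) ≤ 64 / (27 * Real.exp 1) * gammaBar 1 m := by
  have hγ : 0 < gammaBar 1 m := gammaBar_pos hm (by lia)
  have hx : (-1 : ℝ) < m := neg_one_lt_zero.trans_le m.cast_nonneg
  have hexp : (1 - 1 / (m + 1 : ℝ)) ^ (m + 1) ≤ Real.exp (-1) := by
    exact_mod_cast Real.one_sub_div_pow_le_exp_neg (n := m + 1) (t := 1) (by simp)
  have hrat : m * (m + 2 : ℝ) ^ 2 / (m + 1) ^ 3 ≤ 32 / 27 :=
    mul_add_two_sq_div_add_one_cube_le hx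
  calc gammaBar 1 (m + 1)
      = 2 * (1 - 1 / (m + 1 : ℝ)) ^ (m + 1) * (m * (m + 2) ^ 2 / (m + 1) ^ 3) * gammaBar 1 m :=
        gammaBar_one_succ hm
    _ ≤ 2 * Real.exp (-1) * (32 / 27) * gammaBar 1 m :=
        mul_le_mul_of_nonneg_right
          (mul_le_mul (mul_le_mul_of_nonneg_left hexp zero_le_two) hrat (by positivity)
            (by positivity)) hγ.le
    _ = 64 / (27 * Real.exp 1) * gammaBar 1 m := by
        rw [Real.exp_neg]
        field_simp
        ring

theorem gammaBar_one_ratio_bound (m : ℕ) (hm : 2 ≤ m) :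
    gammaBar 1 m ≤ (64 / (27 * Real.exp 1)) * gammaBar 1 (m - 1) ∧
    gammaBar 1 m < gammaBar 1 (m - 1) := by
  have hpred : 0 < m - 1 := by lia
  have hle : gammaBar 1 m ≤ 64 / (27 * Real.exp 1) * gammaBar 1 (m - 1) := by
    simpa only [Nat.sub_add_cancel (Nat.one_le_of_lt hm)] using gammaBar_one_succ_le hpred
  have hconst : 64 / (27 * Real.exp 1) < 1 := by
    rw [div_lt_one (by positivity)]
    linarith [Real.exp_one_gt_d9]
  exact ⟨hle, hle.trans_lt (mul_lt_of_lt_one_left (gammaBar_pos hpred (by lia)) hconst)⟩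
end

section
/- (Wendel's inequality) For every real number x > 0, Γ(x + 1/2) ≤ √x · Γ(x). -/
/-! Log-convexity of `Γ` on `[x, x + 1]` bounds `log (Γ (x + a))` by the chord between
`log (Γ x)` and `log (Γ (x + 1))`; the functional equation says that this chord has slope
`log x`. -/

theorem log_Gamma_add_one {x : ℝ} (hx : 0 < x) :
    Real.log (Real.Gamma (x + 1)) = Real.log x + Real.log (Real.Gamma x) := by
  rw [Real.Gamma_add_one hx.ne', Real.log_mul hx.ne' (Real.Gamma_pos_of_pos hx).ne']

theorem log_Gamma_add_le {x a : ℝ} (hx : 0 < x) (ha₀ : 0 ≤ a) (ha₁ : a ≤ 1) :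
    Real.log (Real.Gamma (x + a)) ≤ a * Real.log x + Real.log (Real.Gamma x) := by
  have hcomb : (1 - a) * x + a * (x + 1) = x + a := by ring
  have chord : Real.log (Real.Gamma ((1 - a) * x + a * (x + 1))) ≤
      (1 - a) * Real.log (Real.Gamma x) + a * Real.log (Real.Gamma (x + 1)) :=
    Real.convexOn_log_Gamma.2 (Set.mem_Ioi.2 hx) (Set.mem_Ioi.2 (by positivity))
      (sub_nonneg.2 ha₁) ha₀ (sub_add_cancel 1 a)
  rw [hcomb, log_Gamma_add_one hx] at chord
  linarith

theorem wendel_inequality_general {x a : ℝ} (hx : 0 < x) (ha₀ : 0 ≤ a) (ha₁ : a ≤ 1) :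
    Real.Gamma (x + a) ≤ x ^ a * Real.Gamma x := by
  have hΓ : 0 < Real.Gamma x := Real.Gamma_pos_of_pos hx
  have hΓa : 0 < Real.Gamma (x + a) := Real.Gamma_pos_of_pos (by positivity)
  have hxa : 0 < x ^ a := Real.rpow_pos_of_pos hx a
  rw [← Real.log_le_log_iff hΓa (mul_pos hxa hΓ), Real.log_mul hxa.ne' hΓ.ne', Real.log_rpow hx]
  exact log_Gamma_add_le hx ha₀ ha₁

theorem wendel_inequality (x : ℝ) (hx : 0 < x) :
    Real.Gamma (x + 1 / 2) ≤ Real.sqrt x * Real.Gamma x := by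
  rw [Real.sqrt_eq_rpow]
  exact wendel_inequality_general hx (by norm_num) (by norm_num)
end
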